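/- arXiv:1311.6175 — 8 statements merged into one kernel-verified Lean document; each statement's English description precedes it below -/
import Mathlib

section
/- Let n ≥ 2 be an integer and let α be a monotone cofinite partial selfmap of L_n ×_lex ℤ (i.e., α ∈ IO_∞(ℤ^n_lex)). If (i, l) ∈ dom α and α(i, l) = (j, m), then i = j; that is, every element of IO_∞(ℤ^n_lex) preserves the first coordinate. -/
/-- Composition of partial selfmaps (left map applied first):
`dom (PComp f g) = {x ∈ dom f : f x ∈ dom g}` and `(PComp f g) x = g (f x)`. -/
def PComp {X : Type*} (f g : X → Option X) : X → Option X := fun x => (f x).bind g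

/-- The identity partial selfmap (everywhere defined). -/
def PId {X : Type*} : X → Option X := fun x => some x

/-- A partial selfmap is injective. -/
def PInj {X : Type*} (f : X → Option X) : Prop :=
  ∀ ⦃x y a : X⦄, f x = some a → f y = some a → x = y

/-- A partial selfmap is monotone with respect to the relation `r`. -/
def PMono {X : Type*} (r : X → X → Prop) (f : X → Option X) : Prop :=
  ∀ ⦃x y a b : X⦄, r x y → f x = some a → f y = some b → r a b

/-- The domain of a partial selfmap is cofinite. -/
def DomCof {X : Type*} (f : X → Option X) : Prop := {x | f x = none}.Finite

/-- The range (image) of a partial selfmap is cofinite. -/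
def RanCof {X : Type*} (f : X → Option X) : Prop := {y | ∀ x, f x ≠ some y}.Finite

/-- `IOmap r f` says that `f` is a monotone (w.r.t. `r`) injective partial selfmap
with cofinite domain and cofinite image, i.e. an element of `IO_∞`. -/
def IOmap {X : Type*} (r : X → X → Prop) (f : X → Option X) : Prop :=
  PInj f ∧ PMono r f ∧ DomCof f ∧ RanCof f

/-- The lexicographic order on `L_n × ℤ` (with `L_n = Fin n`):
`(i,m) ≤ (j,k)` iff `i < j`, or `i = j` and `m ≤ k`. -/
def lexLe (n : ℕ) (p q : Fin n × ℤ) : Prop :=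
  p.1 < q.1 ∨ (p.1 = q.1 ∧ p.2 ≤ q.2)

/-- The domain of a partial selfmap, as a set. -/
def pdom {X : Type*} (f : X → Option X) : Set X := {x | ∃ y, f x = some y}

/-- The range (image) of a partial selfmap, as a set. -/
def pran {X : Type*} (f : X → Option X) : Set X := {y | ∃ x, f x = some y}

/-!
Let `f` be an injective monotone partial selfmap of the lexicographic product `ι × M` with cofinite
domain, and let `i < i'`. If `f` sent a point of `{i} × M` and a point of `{i'} × M` into the same
fiber `{j} × M`, then infinitely many points of `{i} × M` would be squeezed between their images, in
an interval of `{j} × M`, which is finite. So choosing for every `i` a fiber met by the image of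
`{i} × M` gives a strictly monotone selfmap of `ι`, and on a finite linear order the only such
selfmap is the identity.
-/

section CofiniteDomain

variable {X : Type*} {f : X → Option X} {S A : Set X}

theorem PInj.finite_setOf_eq_some (hf : PInj f) (hA : A.Finite) :
    {x | ∃ a ∈ A, f x = some a}.Finite := by
  have fiber_finite (a : X) : {x | f x = some a}.Finite :=
    Set.Subsingleton.finite fun _ hx _ hy => hf hx hy
  refine (hA.biUnion fun a _ => fiber_finite a).subset ?_
  rintro x ⟨a, ha, hxa⟩
  exact Set.mem_biUnion ha hxa

theorem DomCof.exists_eq_some (hdom : DomCof f) (hS : S.Infinite) : ∃ x ∈ S, ∃ a, f x = some a := by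
  obtain ⟨x, hxS, hx⟩ := hS.exists_notMem_finite hdom
  exact ⟨x, hxS, Option.ne_none_iff_exists'.mp hx⟩

theorem DomCof.exists_eq_some_notMem (hdom : DomCof f) (hinj : PInj f)
    (hS : S.Infinite) (hA : A.Finite) : ∃ x ∈ S, ∃ a ∉ A, f x = some a := by
  obtain ⟨x, ⟨hxS, hxA⟩, a, hxa⟩ := hdom.exists_eq_some (hS.sdiff (hinj.finite_setOf_eq_some hA))
  exact ⟨x, hxS, a, fun ha => hxA ⟨a, ha, hxa⟩, hxa⟩

end CofiniteDomain

theorem eq_of_leftTotal_of_strictMono {ι : Type*} [LinearOrder ι] [Finite ι] {R : ι → ι → Prop}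
    (total : Relator.LeftTotal R)
    (mono : ∀ ⦃i i' j j' : ι⦄, i < i' → R i j → R i' j' → j < j')
    {i j : ι} (hij : R i j) : i = j := by
  choose g hg using total
  have g_strictMono : StrictMono g := fun a b hab => mono hab (hg a) (hg b)
  have R_self (a : ι) : R a a := by
    have g_apply : g a = a := le_antisymm g_strictMono.apply_le g_strictMono.le_apply
    simpa only [g_apply] using hg a
  rcases lt_trichotomy i j with hlt | heq | hgt
  · exact absurd (mono hlt hij (R_self j)) (lt_irrefl j)
  · exact heq
  · exact absurd (mono hgt (R_self j) hij) (lt_irrefl j)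

section Fibers

variable {ι M : Type*}

/-- The relation that a partial selfmap `f` of `ι × M` induces on the index set `ι`:
`f` sends some point of the fiber `{i} × M` into the fiber `{j} × M`. -/
def FiberRel (f : ι × M → Option (ι × M)) (i j : ι) : Prop :=
  ∃ l m, f (i, l) = some (j, m)

variable [Preorder M] {f : ι × M → Option (ι × M)}

theorem mem_singleton_prod_Icc_of_lex [Preorder ι] {j : ι} {m m' : M} {a : ι × M}
    (hl : Prod.Lex (· < ·) (· ≤ ·) (j, m) a) (hr : Prod.Lex (· < ·) (· ≤ ·) a (j, m')) :
    a ∈ ({j} : Set ι) ×ˢ Set.Icc m m' := by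
  rcases Prod.lex_def.mp hl with hlt | ⟨rfl, hm⟩
  · rcases Prod.lex_def.mp hr with hgt | ⟨heq, -⟩
    · exact absurd hgt hlt.asymm
    · exact absurd heq hlt.ne'
  · rcases Prod.lex_def.mp hr with hgt | ⟨-, hm'⟩
    · exact absurd hgt (lt_irrefl _)
    · exact ⟨rfl, hm, hm'⟩

variable [NoMaxOrder M]

theorem infinite_singleton_prod_Ioi (i : ι) (l : M) : (({i} : Set ι) ×ˢ Set.Ioi l).Infinite :=
  (Set.Ioi_infinite l).prod_right (Set.singleton_nonempty i)

theorem DomCof.leftTotal_fiberRel [Nonempty M] (hdom : DomCof f) :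
    Relator.LeftTotal (FiberRel f) := by
  intro i
  obtain ⟨l⟩ := ‹Nonempty M›
  obtain ⟨⟨_, k⟩, ⟨rfl, -⟩, ⟨j, m⟩, hkm⟩ := hdom.exists_eq_some (infinite_singleton_prod_Ioi i l)
  exact ⟨j, k, m, hkm⟩

theorem FiberRel.lt_of_lt [Preorder ι] [LocallyFiniteOrder M] (hinj : PInj f)
    (hmono : PMono (Prod.Lex (· < ·) (· ≤ ·)) f) (hdom : DomCof f) {i i' j j' : ι} (hi : i < i')
    (h : FiberRel f i j) (h' : FiberRel f i' j') : j < j' := by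
  obtain ⟨l, m, hf⟩ := h
  obtain ⟨l', m', hf'⟩ := h'
  rcases Prod.lex_def.mp (hmono (Prod.Lex.left l l' hi) hf hf') with hj | ⟨rfl, -⟩
  · exact hj
  · obtain ⟨⟨_, k⟩, ⟨rfl, hk⟩, a, ha_notMem, hfa⟩ :=
      hdom.exists_eq_some_notMem hinj (infinite_singleton_prod_Ioi i l)
        ((Set.finite_singleton j).prod (Set.finite_Icc m m'))
    have ha_ge := hmono (Prod.Lex.right _ (le_of_lt hk)) hf hfa
    have ha_le := hmono (Prod.Lex.left k l' hi) hfa hf'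
    exact absurd (mem_singleton_prod_Icc_of_lex ha_ge ha_le) ha_notMem

end Fibers

theorem lexLe_eq_prodLex (n : ℕ) : lexLe n = Prod.Lex (· < ·) (· ≤ ·) := by
  ext p q
  exact Prod.lex_def.symm

theorem stmt0_general {ι M : Type*} [LinearOrder ι] [Finite ι] [Preorder M] [NoMaxOrder M]
    [LocallyFiniteOrder M] {f : ι × M → Option (ι × M)} (hinj : PInj f)
    (hmono : PMono (Prod.Lex (· < ·) (· ≤ ·)) f) (hdom : DomCof f) {i j : ι} {l m : M}
    (h : f (i, l) = some (j, m)) : i = j :=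
  have : Nonempty M := ⟨l⟩
  eq_of_leftTotal_of_strictMono hdom.leftTotal_fiberRel
    (fun _ _ _ _ => FiberRel.lt_of_lt hinj hmono hdom) ⟨l, m, h⟩

/-- Every element of `IO_∞(ℤ^n_lex)` (n ≥ 2) preserves the first coordinate. -/
theorem stmt0 (n : ℕ) (hn : 2 ≤ n)
    (f : Fin n × ℤ → Option (Fin n × ℤ)) (hf : IOmap (lexLe n) f)
    (i j : Fin n) (l m : ℤ) (h : f (i, l) = some (j, m)) : i = j :=
  stmt0_general hf.1 (lexLe_eq_prodLex n ▸ hf.2.1) hf.2.2.1 h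
end

section
/- For every positive integer n, any two cofinite subsets of L_n ×_lex ℤ, each equipped with the induced order, are order isomorphic. -/
/-!
The order on `A` only compares second coordinates inside a common fibre `{m | (i, m) ∈ A}`, so
order isomorphisms between the corresponding fibres of `A` and `B` glue to one between `A` and `B`.
Each fibre of a cofinite set is a subset of `ℤ` unbounded in both directions, and such a subset,
being a locally finite linear order without endpoints, is isomorphic to `ℤ`.
-/

section Cofinite

variable {ι α : Type*} [Preorder α] [Nonempty α] {s : Set α} {A : Set (ι × α)}

theorem not_bddAbove_of_finite_compl [IsDirectedOrder α] [NoTopOrder α] (hs : sᶜ.Finite) :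
    ¬BddAbove s := fun h =>
  not_bddAbove_univ (s.union_compl_self ▸ h.union hs.bddAbove)

theorem not_bddBelow_of_finite_compl [IsCodirectedOrder α] [NoBotOrder α] (hs : sᶜ.Finite) :
    ¬BddBelow s :=
  not_bddAbove_of_finite_compl (α := αᵒᵈ) hs

theorem not_bddAbove_fiber_of_finite_compl [IsDirectedOrder α] [NoTopOrder α] (hA : Aᶜ.Finite)
    (i : ι) : ¬BddAbove (Prod.mk i ⁻¹' A) :=
  not_bddAbove_of_finite_compl (hA.preimage (Prod.mk_right_injective i).injOn)

theorem not_bddBelow_fiber_of_finite_compl [IsCodirectedOrder α] [NoBotOrder α] (hA : Aᶜ.Finite)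
    (i : ι) : ¬BddBelow (Prod.mk i ⁻¹' A) :=
  not_bddAbove_fiber_of_finite_compl (α := αᵒᵈ) hA i

end Cofinite

section OrderIsoInt

variable {α : Type*} [LinearOrder α] {s : Set α}

theorem noMaxOrder_of_not_bddAbove (hs : ¬BddAbove s) : NoMaxOrder s where
  exists_gt a :=
    let ⟨b, hb, hab⟩ := not_bddAbove_iff.1 hs a
    ⟨⟨b, hb⟩, hab⟩

theorem noMinOrder_of_not_bddBelow (hs : ¬BddBelow s) : NoMinOrder s where
  exists_lt a :=
    let ⟨b, hb, hba⟩ := not_bddBelow_iff.1 hs a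
    ⟨⟨b, hb⟩, hba⟩

variable [LocallyFiniteOrder α] [Nonempty α]

theorem nonempty_orderIso_int [NoMaxOrder α] [NoMinOrder α] : Nonempty (α ≃o ℤ) :=
  letI := LinearLocallyFiniteOrder.succOrder α
  letI := LinearLocallyFiniteOrder.predOrder α
  ⟨orderIsoIntOfLinearSuccPredArch⟩

theorem nonempty_orderIso_int_of_not_bdd (ha : ¬BddAbove s) (hb : ¬BddBelow s) :
    Nonempty (s ≃o ℤ) := by
  classical
  have := noMaxOrder_of_not_bddAbove ha
  have := noMinOrder_of_not_bddBelow hb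
  have := (nonempty_of_not_bddAbove ha).to_subtype
  exact nonempty_orderIso_int

end OrderIsoInt

section Lex

variable {ι α β : Type*}

/-- Glues order isomorphisms between the fibres of `A` and `B` over each `i : ι` to an isomorphism
between `A` and `B` with the induced lexicographic relations. The relation `r` on `ι` is arbitrary,
since the isomorphism fixes first coordinates. -/
def relIsoProdLexOfFibers [LE α] [LE β] (r : ι → ι → Prop) {A : Set (ι × α)} {B : Set (ι × β)}
    (e : ∀ i, Prod.mk i ⁻¹' A ≃o Prod.mk i ⁻¹' B) :
    Subrel (Prod.Lex r (· ≤ ·)) (· ∈ A) ≃r Subrel (Prod.Lex r (· ≤ ·)) (· ∈ B) where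
  toEquiv := (Equiv.setProdEquivSigma A).trans <|
    (Equiv.sigmaCongrRight fun i => (e i).toEquiv).trans (Equiv.setProdEquivSigma B).symm
  map_rel_iff' := by
    rintro ⟨⟨i, a⟩, ha⟩ ⟨⟨j, b⟩, hb⟩
    simp only [subrel_val, Prod.lex_def]
    refine or_congr Iff.rfl (and_congr_right fun hij => ?_)
    obtain rfl : i = j := hij
    exact (e i).map_rel_iff

theorem stmt1_general [LinearOrder α] [LocallyFiniteOrder α] [Nonempty α] (r : ι → ι → Prop)
    {A B : Set (ι × α)}
    (hA : ∀ i, ¬BddAbove (Prod.mk i ⁻¹' A)) (hA' : ∀ i, ¬BddBelow (Prod.mk i ⁻¹' A))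
    (hB : ∀ i, ¬BddAbove (Prod.mk i ⁻¹' B)) (hB' : ∀ i, ¬BddBelow (Prod.mk i ⁻¹' B)) :
    Nonempty (Subrel (Prod.Lex r (· ≤ ·)) (· ∈ A) ≃r Subrel (Prod.Lex r (· ≤ ·)) (· ∈ B)) :=
  have hAB (i : ι) : Nonempty (Prod.mk i ⁻¹' A ≃o Prod.mk i ⁻¹' B) :=
    Nonempty.map2 (fun eA eB => eA.trans eB.symm)
      (nonempty_orderIso_int_of_not_bdd (hA i) (hA' i))
      (nonempty_orderIso_int_of_not_bdd (hB i) (hB' i))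
  ⟨relIsoProdLexOfFibers r fun i => (hAB i).some⟩

end Lex

/-- Any two cofinite subsets of `L_n ×_lex ℤ` are order isomorphic. -/
theorem stmt1 (n : ℕ) (hn : 0 < n) (A B : Set (Fin n × ℤ))
    (hA : Aᶜ.Finite) (hB : Bᶜ.Finite) :
    ∃ g : A ≃ B, ∀ x y : A, lexLe n x.1 y.1 ↔ lexLe n (g x).1 (g y).1 := by
  obtain ⟨g⟩ := stmt1_general (· < ·)
    (not_bddAbove_fiber_of_finite_compl hA) (not_bddBelow_fiber_of_finite_compl hA)
    (not_bddAbove_fiber_of_finite_compl hB) (not_bddBelow_fiber_of_finite_compl hB)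
  exact ⟨g.toEquiv, fun _ _ => by rw [lexLe_eq_prodLex]; exact g.map_rel_iff.symm⟩
end

section
/- Let n ≥ 2. For α ∈ IO_∞(ℤ^n_lex) and i ∈ {1,…,n}, let α^i be the partial selfmap of ℤ with dom α^i = {k ∈ ℤ : (i,k) ∈ dom α} and α(i,k) = (i, α^i(k)) (well defined since every element of IO_∞(ℤ^n_lex) preserves the first coordinate); then α^i ∈ IO_∞(ℤ). The map α ↦ (α^1, …, α^n) is a bijection from IO_∞(ℤ^n_lex) onto the n-fold direct product (IO_∞(ℤ))^n and satisfies (α·β)^i = α^i·β^i for all α, β ∈ IO_∞(ℤ^n_lex) and all i; hence IO_∞(ℤ^n_lex) is isomorphic as a semigroup to the direct power (IO_∞(ℤ))^n with coordinatewise composition. -/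
/-- The restriction `α^i` of an element of `IO_∞(ℤ^n_lex)` to the `i`-th line. -/
def restr (n : ℕ) (f : Fin n × ℤ → Option (Fin n × ℤ)) (i : Fin n) : ℤ → Option ℤ :=
  fun k => (f (i, k)).map Prod.snd

/-!
In `ι ×ₗ α`, with `α` infinite and locally finite, two points lie on the same line `{i} × α` if and
only if the order interval between them is finite. A monotone cofinite partial bijection of a linear
order preserves and reflects finiteness of intervals, so it sends lines to lines, different lines to
different lines, and meets every line; the map it induces on `ι` is strictly increasing and
surjective, hence the identity when `ι` is well-ordered. Thus every element of `IO_∞` is glued from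
its restrictions to the lines, and each defining property of `IO_∞` can be checked line by line.
-/

section LinearOrder

variable {X : Type*} [LinearOrder X] {f : X → Option X} {x y a b : X}

theorem IOmap.le_iff_le (hf : IOmap (· ≤ ·) f) (hx : f x = some a) (hy : f y = some b) :
    a ≤ b ↔ x ≤ y := by
  obtain ⟨hinj, hmono, -, -⟩ := hf
  refine ⟨fun hab => ?_, fun hxy => hmono hxy hx hy⟩
  by_contra! hyx
  obtain rfl : a = b := le_antisymm hab (hmono hyx.le hy hx)
  exact hyx.ne (hinj hy hx)

theorem IOmap.finite_Icc_iff (hf : IOmap (· ≤ ·) f) (hx : f x = some a) (hy : f y = some b) :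
    (Set.Icc a b).Finite ↔ (Set.Icc x y).Finite := by
  obtain ⟨hinj, -, hdom, hran⟩ := id hf
  constructor
  · intro hab
    have hpre : (f ⁻¹' (some '' Set.Icc a b)).Finite := by
      refine (hab.image some).preimage ?_
      rintro z ⟨c, -, hc⟩ w - hzw
      exact hinj hc.symm (hzw ▸ hc.symm)
    refine (hdom.union hpre).subset fun z hz => ?_
    rcases hfz : f z with _ | c
    · exact Or.inl hfz
    · exact Or.inr ⟨c, ⟨(hf.le_iff_le hx hfz).2 hz.1, (hf.le_iff_le hfz hy).2 hz.2⟩, hfz.symm⟩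
  · intro hxy
    have himage : (some ⁻¹' (f '' Set.Icc x y)).Finite :=
      (hxy.image f).preimage (Option.some_injective X).injOn
    refine (hran.union himage).subset fun c hc => ?_
    by_cases hcr : ∀ z, f z ≠ some c
    · exact Or.inl hcr
    · obtain ⟨z, hz⟩ := not_forall_not.1 hcr
      exact Or.inr ⟨z, ⟨(hf.le_iff_le hx hz).1 hc.1, (hf.le_iff_le hz hy).1 hc.2⟩, hz⟩

theorem finite_of_finite_Iic_of_finite_Ici [LocallyFiniteOrder X] (hb : (Set.Iic b).Finite)
    (ha : (Set.Ici a).Finite) : Finite X := by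
  refine Set.finite_univ_iff.1 (((hb.union (Set.finite_Icc b a)).union ha).subset fun z _ => ?_)
  rcases le_total z b with hzb | hbz
  · exact Or.inl (Or.inl hzb)
  rcases le_total z a with hza | haz
  · exact Or.inl (Or.inr ⟨hbz, hza⟩)
  · exact Or.inr haz

end LinearOrder

section Lines

variable {ι α : Type*}

theorem finite_lex_iff [Finite ι] {S : Set (ι ×ₗ α)} :
    S.Finite ↔ ∀ i, {k | toLex (i, k) ∈ S}.Finite := by
  refine ⟨fun hS i => hS.preimage (Prod.mk_right_injective i).injOn, fun hS => ?_⟩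
  refine (Set.finite_iUnion fun i => (hS i).image fun k => toLex (i, k)).subset fun x hx => ?_
  exact Set.mem_iUnion.2 ⟨(ofLex x).1, (ofLex x).2, hx, rfl⟩

theorem exists_toLex_notMem_of_finite [Infinite α] {S : Set (ι ×ₗ α)} (hS : S.Finite) (i : ι) :
    ∃ k, toLex (i, k) ∉ S :=
  (hS.preimage (f := fun k => toLex (i, k)) (Prod.mk_right_injective i).injOn).exists_notMem

variable [LinearOrder ι] [LinearOrder α] [LocallyFiniteOrder α] [Infinite α]

theorem finite_Icc_lex_iff {x y : ι ×ₗ α} (hxy : x ≤ y) :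
    (Set.Icc x y).Finite ↔ (ofLex x).1 = (ofLex y).1 := by
  constructor
  · intro hfin
    by_contra hne
    have hlt : (ofLex x).1 < (ofLex y).1 := (Prod.Lex.monotone_fst x y hxy).lt_of_ne hne
    have hIci : (Set.Ici (ofLex x).2).Finite :=
      (hfin.preimage (f := fun k => toLex ((ofLex x).1, k))
        (Prod.mk_right_injective _).injOn).subset fun k hk =>
          ⟨Prod.Lex.le_iff.2 (Or.inr ⟨rfl, hk⟩), Prod.Lex.le_iff.2 (Or.inl hlt)⟩
    have hIic : (Set.Iic (ofLex y).2).Finite :=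
      (hfin.preimage (f := fun k => toLex ((ofLex y).1, k))
        (Prod.mk_right_injective _).injOn).subset fun k hk =>
          ⟨Prod.Lex.le_iff.2 (Or.inl hlt), Prod.Lex.le_iff.2 (Or.inr ⟨rfl, hk⟩)⟩
    exact (finite_of_finite_Iic_of_finite_Ici hIic hIci).false
  · intro heq
    refine ((Set.finite_Icc (ofLex x).2 (ofLex y).2).image
      fun k => toLex ((ofLex x).1, k)).subset fun z hz => ?_
    have hzx : (ofLex x).1 = (ofLex z).1 :=
      le_antisymm (Prod.Lex.monotone_fst x z hz.1) (heq ▸ Prod.Lex.monotone_fst z y hz.2)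
    refine ⟨(ofLex z).2, ⟨(Prod.Lex.le_iff'.1 hz.1).2 hzx,
      (Prod.Lex.le_iff'.1 hz.2).2 (hzx.symm.trans heq)⟩, ?_⟩
    exact congrArg toLex (Prod.ext hzx rfl)

variable {f : ι ×ₗ α → Option (ι ×ₗ α)} {x y a b : ι ×ₗ α}

theorem IOmap.fst_eq_fst_iff (hf : IOmap (· ≤ ·) f) (hx : f x = some a) (hy : f y = some b) :
    (ofLex a).1 = (ofLex b).1 ↔ (ofLex x).1 = (ofLex y).1 := by
  wlog hxy : x ≤ y generalizing x y a b
  · rw [eq_comm, this hy hx (le_of_not_ge hxy), eq_comm]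
  · rw [← finite_Icc_lex_iff ((hf.le_iff_le hx hy).2 hxy), ← finite_Icc_lex_iff hxy,
      hf.finite_Icc_iff hx hy]

theorem IOmap.fst_lt_fst (hf : IOmap (· ≤ ·) f) (hx : f x = some a) (hy : f y = some b)
    (hxy : (ofLex x).1 < (ofLex y).1) : (ofLex a).1 < (ofLex b).1 := by
  have hab : a ≤ b := (hf.le_iff_le hx hy).2 (Prod.Lex.le_iff.2 (Or.inl hxy))
  exact (Prod.Lex.monotone_fst a b hab).lt_of_ne fun h => hxy.ne ((hf.fst_eq_fst_iff hx hy).1 h)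

theorem IOmap.fst_eq [WellFoundedLT ι] (hf : IOmap (· ≤ ·) f) (hx : f x = some a) :
    (ofLex a).1 = (ofLex x).1 := by
  obtain ⟨-, -, hdom, hran⟩ := id hf
  have hmeets (i : ι) : ∃ k p, f (toLex (i, k)) = some p :=
    (exists_toLex_notMem_of_finite hdom i).imp fun _ => Option.ne_none_iff_exists'.1
  choose k p hp using hmeets
  let φ : ι → ι := fun i => (ofLex (p i)).1
  have hφ {z c} (hz : f z = some c) : (ofLex c).1 = φ (ofLex z).1 :=
    (hf.fst_eq_fst_iff hz (hp _)).2 rfl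
  have hmono : StrictMono φ := fun i j hij => hf.fst_lt_fst (hp i) (hp j) hij
  have hsurj : Function.Surjective φ := fun j => by
    obtain ⟨m, hm⟩ := exists_toLex_notMem_of_finite hran j
    obtain ⟨z, hz⟩ := not_forall_not.1 hm
    exact ⟨(ofLex z).1, (hφ hz).symm⟩
  have hid : φ = id := (hmono.range_inj strictMono_id).1 (by rw [hsurj.range_eq, Set.range_id])
  rw [hφ hx, hid, id]

end Lines

section Gluing

variable {ι α : Type*}

/-- The restriction of a partial selfmap of `ι ×ₗ α` to the line `{i} × α`, read off in the second
coordinate: `restr` for arbitrary factors. As there, the first coordinate of the value is dropped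
even if it differs from `i`. -/
def lexRestr (f : ι ×ₗ α → Option (ι ×ₗ α)) (i : ι) : α → Option α :=
  fun k => (f (toLex (i, k))).map fun p => (ofLex p).2

/-- The partial selfmap of `ι ×ₗ α` that acts on each line `{i} × α` as `F i`; gluing is the inverse
of `f ↦ lexRestr f` on partial selfmaps preserving the first coordinate. -/
def lexGlue (F : ι → α → Option α) : ι ×ₗ α → Option (ι ×ₗ α) :=
  fun x => (F (ofLex x).1 (ofLex x).2).map fun m => toLex ((ofLex x).1, m)

variable {F : ι → α → Option α}

theorem lexGlue_eq_none_iff {i : ι} {k : α} : lexGlue F (toLex (i, k)) = none ↔ F i k = none :=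
  Option.map_eq_none_iff

theorem lexGlue_eq_some_iff {i j : ι} {k m : α} :
    lexGlue F (toLex (i, k)) = some (toLex (j, m)) ↔ i = j ∧ F i k = some m := by
  simp [lexGlue, and_comm]

theorem lexRestr_lexGlue (F : ι → α → Option α) : lexRestr (lexGlue F) = F := by
  funext i k
  simp [lexRestr, lexGlue, Function.comp_def]

theorem lexGlue_lexRestr {f : ι ×ₗ α → Option (ι ×ₗ α)}
    (hf : ∀ x a, f x = some a → (ofLex a).1 = (ofLex x).1) : lexGlue (lexRestr f) = f := by
  funext x
  change ((f x).map _).map _ = f x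
  rcases hx : f x with _ | a
  · rfl
  · exact congrArg (some ∘ toLex) (Prod.ext (hf x a hx).symm rfl)

theorem pComp_lexGlue (F G : ι → α → Option α) :
    PComp (lexGlue F) (lexGlue G) = lexGlue fun i => PComp (F i) (G i) := by
  funext x
  rcases hx : F (ofLex x).1 (ofLex x).2 with _ | m <;> simp [PComp, lexGlue, hx]

theorem pInj_lexGlue_iff : PInj (lexGlue F) ↔ ∀ i, PInj (F i) := by
  simp only [PInj, Lex.forall, Prod.forall, lexGlue_eq_some_iff]
  constructor
  · intro h i k l m hk hl
    exact (Prod.mk.inj (toLex.injective (h i k i l i m ⟨rfl, hk⟩ ⟨rfl, hl⟩))).2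
  · rintro h i k j l _ m ⟨rfl, hk⟩ ⟨rfl, hl⟩
    rw [h j hk hl]

theorem pMono_lexGlue_iff [Preorder ι] [LE α] :
    PMono (· ≤ ·) (lexGlue F) ↔ ∀ i, PMono (· ≤ ·) (F i) := by
  simp only [PMono, Lex.forall, Prod.forall, lexGlue_eq_some_iff, Prod.Lex.toLex_le_toLex]
  constructor
  · intro h i k l m m' hkl hk hl
    simpa using h i k i l i m i m' (Or.inr ⟨rfl, hkl⟩) ⟨rfl, hk⟩ ⟨rfl, hl⟩
  · rintro h i k j l _ m _ m' hle ⟨rfl, hk⟩ ⟨rfl, hl⟩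
    refine hle.imp_right ?_
    rintro ⟨rfl, hkl⟩
    exact ⟨rfl, h i hkl hk hl⟩

theorem domCof_lexGlue_iff [Finite ι] : DomCof (lexGlue F) ↔ ∀ i, DomCof (F i) := by
  simp only [DomCof, finite_lex_iff, Set.mem_ofPred_eq, lexGlue_eq_none_iff]

theorem ranCof_lexGlue_iff [Finite ι] : RanCof (lexGlue F) ↔ ∀ i, RanCof (F i) := by
  have hmissed (j : ι) (m : α) :
      (∀ x, lexGlue F x ≠ some (toLex (j, m))) ↔ ∀ k, F j k ≠ some m := by
    simp only [Lex.forall, Prod.forall, ne_eq, lexGlue_eq_some_iff, not_and]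
    exact ⟨fun h k => h j k rfl, by rintro h i k rfl; exact h k⟩
  simp only [RanCof, finite_lex_iff, Set.mem_ofPred_eq, hmissed]

theorem iOmap_lexGlue_iff [Finite ι] [Preorder ι] [LE α] :
    IOmap (· ≤ ·) (lexGlue F) ↔ ∀ i, IOmap (· ≤ ·) (F i) := by
  simp only [IOmap, pInj_lexGlue_iff, pMono_lexGlue_iff, domCof_lexGlue_iff, ranCof_lexGlue_iff,
    forall_and]

end Gluing

theorem lexLe_eq (n : ℕ) : lexLe n = fun p q => toLex p ≤ toLex q :=
  funext₂ fun _ _ => propext Prod.Lex.toLex_le_toLex.symm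

theorem stmt2_general {ι α : Type*} [LinearOrder ι] [Finite ι] [LinearOrder α]
    [LocallyFiniteOrder α] [Infinite α] :
    (∀ f : ι ×ₗ α → Option (ι ×ₗ α), IOmap (· ≤ ·) f → ∀ i, IOmap (· ≤ ·) (lexRestr f i)) ∧
    (∀ f g : ι ×ₗ α → Option (ι ×ₗ α), IOmap (· ≤ ·) f → IOmap (· ≤ ·) g →
      (∀ i, lexRestr f i = lexRestr g i) → f = g) ∧
    (∀ F : ι → α → Option α, (∀ i, IOmap (· ≤ ·) (F i)) →
      ∃ f : ι ×ₗ α → Option (ι ×ₗ α), IOmap (· ≤ ·) f ∧ ∀ i, lexRestr f i = F i) ∧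
    (∀ f g : ι ×ₗ α → Option (ι ×ₗ α), IOmap (· ≤ ·) f → IOmap (· ≤ ·) g →
      ∀ i, lexRestr (PComp f g) i = PComp (lexRestr f i) (lexRestr g i)) := by
  have hglue {f : ι ×ₗ α → Option (ι ×ₗ α)} (hf : IOmap (· ≤ ·) f) : lexGlue (lexRestr f) = f :=
    lexGlue_lexRestr fun _ _ => hf.fst_eq
  refine ⟨fun f hf => ?_, fun f g hf hg hfg => ?_, fun F hF => ?_, fun f g hf hg i => ?_⟩
  · exact iOmap_lexGlue_iff.1 ((hglue hf).symm ▸ hf)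
  · rw [← hglue hf, funext hfg, hglue hg]
  · exact ⟨lexGlue F, iOmap_lexGlue_iff.2 hF, congrFun (lexRestr_lexGlue F)⟩
  · conv_lhs => rw [← hglue hf, ← hglue hg, pComp_lexGlue, lexRestr_lexGlue]

/-- `IO_∞(ℤ^n_lex)` is isomorphic as a semigroup to the direct power `(IO_∞(ℤ))^n`:
the map `α ↦ (α^1, …, α^n)` takes values in `(IO_∞(ℤ))^n`, is injective, surjective
onto `(IO_∞(ℤ))^n`, and satisfies `(α·β)^i = α^i·β^i`. -/
theorem stmt2 (n : ℕ) (hn : 2 ≤ n) :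
    (∀ f, IOmap (lexLe n) f → ∀ i, IOmap (· ≤ · : ℤ → ℤ → Prop) (restr n f i)) ∧
    (∀ f g, IOmap (lexLe n) f → IOmap (lexLe n) g →
      (∀ i, restr n f i = restr n g i) → f = g) ∧
    (∀ F : Fin n → ℤ → Option ℤ, (∀ i, IOmap (· ≤ · : ℤ → ℤ → Prop) (F i)) →
      ∃ f, IOmap (lexLe n) f ∧ ∀ i, restr n f i = F i) ∧
    (∀ f g, IOmap (lexLe n) f → IOmap (lexLe n) g →
      ∀ i, restr n (PComp f g) i = PComp (restr n f i) (restr n g i)) := by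
  rw [lexLe_eq]
  exact stmt2_general
end

section
/- Let n be a positive integer and α, β ∈ IO_∞(ℤ^n_lex). Then: (a) there exist χ, χ' ∈ IO_∞(ℤ^n_lex) with α·χ = β and β·χ' = α if and only if dom α = dom β; (b) there exist χ, χ' ∈ IO_∞(ℤ^n_lex) with χ·α = β and χ'·β = α if and only if ran α = ran β. (These characterize Green's relations R and L on the monoid IO_∞(ℤ^n_lex): α R β iff dom α = dom β, and α L β iff ran α = ran β; consequently α H β iff dom α = dom β and ran α = ran β.) -/
/-!
Every `α` in the monoid has an inverse partial map `α⁻¹` in it: on a linear order, the inverse of a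
monotone injection is monotone, and inversion exchanges missing domain points with missing range
points. If `dom β ⊆ dom α`, then `α · (α⁻¹ · β) = β`; if `ran β ⊆ ran α`, then `(β · α⁻¹) · α = β`.
Thus one-sided divisibility is inclusion of domains or of ranges.
-/

section PartialMaps

variable {X : Type*} {r : X → X → Prop} {f g : X → Option X} {x y z : X}

theorem pComp_eq_some_iff : PComp f g x = some z ↔ ∃ y, f x = some y ∧ g y = some z :=
  Option.bind_eq_some_iff

theorem pdom_pComp_subset (f g : X → Option X) : pdom (PComp f g) ⊆ pdom f := by
  rintro x ⟨z, hz⟩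
  obtain ⟨y, hy, -⟩ := pComp_eq_some_iff.1 hz
  exact ⟨y, hy⟩

theorem pran_pComp_subset (f g : X → Option X) : pran (PComp f g) ⊆ pran g := by
  rintro z ⟨x, hz⟩
  obtain ⟨y, -, hy⟩ := pComp_eq_some_iff.1 hz
  exact ⟨y, hy⟩

theorem PInj.pComp (hf : PInj f) (hg : PInj g) : PInj (PComp f g) := by
  intro x x' z hx hx'
  obtain ⟨y, hxy, hyz⟩ := pComp_eq_some_iff.1 hx
  obtain ⟨y', hxy', hyz'⟩ := pComp_eq_some_iff.1 hx'
  obtain rfl : y = y' := hg hyz hyz'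
  exact hf hxy hxy'

theorem PMono.pComp (hf : PMono r f) (hg : PMono r g) : PMono r (PComp f g) := by
  intro x x' z z' hr hx hx'
  obtain ⟨y, hxy, hyz⟩ := pComp_eq_some_iff.1 hx
  obtain ⟨y', hxy', hyz'⟩ := pComp_eq_some_iff.1 hx'
  exact hg (hf hr hxy hxy') hyz hyz'

theorem DomCof.pComp (hf : DomCof f) (hinj : PInj f) (hg : DomCof g) : DomCof (PComp f g) := by
  have injOn_preimage : Set.InjOn f (f ⁻¹' (some '' {y | g y = none})) := by
    rintro x ⟨y, -, hy⟩ x' - hxx'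
    exact hinj hy.symm (hxx' ▸ hy.symm)
  refine (hf.union ((hg.image some).preimage injOn_preimage)).subset ?_
  intro x (hx : PComp f g x = none)
  cases hfx : f x with
  | none => exact Or.inl hfx
  | some y =>
    have hgy : g y = none := by simpa only [PComp, hfx, Option.bind_some] using hx
    exact Or.inr ⟨y, hgy, hfx.symm⟩

theorem RanCof.pComp (hf : RanCof f) (hg : RanCof g) : RanCof (PComp f g) := by
  have finite_image : (some ⁻¹' (g '' {y | ∀ x, f x ≠ some y})).Finite :=
    (hf.image g).preimage (Option.some_injective X).injOn
  refine (hg.union finite_image).subset fun z hz ↦ ?_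
  by_cases hzg : z ∈ pran g
  · obtain ⟨y, hy⟩ := hzg
    exact Or.inr ⟨y, fun x hx ↦ hz x (pComp_eq_some_iff.2 ⟨y, hx, hy⟩), hy⟩
  · exact Or.inl fun y hy ↦ hzg ⟨y, hy⟩

theorem IOmap.pComp (hf : IOmap r f) (hg : IOmap r g) : IOmap r (PComp f g) := by
  obtain ⟨finj, fmono, fdom, fran⟩ := hf
  obtain ⟨ginj, gmono, gdom, gran⟩ := hg
  exact ⟨finj.pComp ginj, fmono.pComp gmono, fdom.pComp finj gdom, fran.pComp gran⟩

open Classical in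
/-- The inverse of a partial selfmap, with domain the range of `f`. If `f` is not injective, it
picks an arbitrary preimage of each point of the range. -/
noncomputable def PInv (f : X → Option X) : X → Option X := fun y ↦
  if h : ∃ x, f x = some y then some h.choose else none

theorem apply_of_pInv_eq_some (h : PInv f y = some x) : f x = some y := by
  unfold PInv at h
  split_ifs at h with hy
  exact Option.some.inj h ▸ hy.choose_spec

theorem exists_pInv_eq_some (h : y ∈ pran f) : ∃ x, PInv f y = some x :=
  ⟨_, dif_pos h⟩

theorem PInj.pInv_eq_some_iff (hf : PInj f) : PInv f y = some x ↔ f x = some y := by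
  refine ⟨apply_of_pInv_eq_some, fun hx ↦ ?_⟩
  obtain ⟨x', hx'⟩ := exists_pInv_eq_some ⟨x, hx⟩
  rwa [hf hx (apply_of_pInv_eq_some hx')]

theorem pInj_pInv (f : X → Option X) : PInj (PInv f) := fun _ _ _ hy hy' ↦
  Option.some.inj ((apply_of_pInv_eq_some hy).symm.trans (apply_of_pInv_eq_some hy'))

theorem PMono.pInv [Std.Total r] [Std.Antisymm r] (hf : PMono r f) : PMono r (PInv f) := by
  intro y y' x x' hyy' hx hx'
  rcases total_of r x x' with hxx' | hx'x
  · exact hxx'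
  · have hy'y : r y' y := hf hx'x (apply_of_pInv_eq_some hx') (apply_of_pInv_eq_some hx)
    obtain rfl : y = y' := antisymm_of r hyy' hy'y
    obtain rfl : x = x' := Option.some.inj (hx.symm.trans hx')
    exact hx'x

theorem RanCof.domCof_pInv (hf : RanCof f) : DomCof (PInv f) := by
  refine hf.subset fun y hy x hx ↦ ?_
  obtain ⟨x', hx'⟩ := exists_pInv_eq_some ⟨x, hx⟩
  exact Option.some_ne_none x' (hx'.symm.trans hy)

theorem DomCof.ranCof_pInv (hf : DomCof f) (hinj : PInj f) : RanCof (PInv f) :=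
  hf.subset fun _ hx ↦
    Option.eq_none_iff_forall_ne_some.2 fun y hy ↦ hx y (hinj.pInv_eq_some_iff.2 hy)

theorem IOmap.pInv [Std.Total r] [Std.Antisymm r] (hf : IOmap r f) : IOmap r (PInv f) := by
  obtain ⟨hinj, hmono, hdom, hran⟩ := hf
  exact ⟨pInj_pInv f, hmono.pInv, hran.domCof_pInv, hdom.ranCof_pInv hinj⟩

theorem PInj.pComp_pInv_pComp (hf : PInj f) (h : pdom g ⊆ pdom f) :
    PComp f (PComp (PInv f) g) = g := by
  funext x
  refine Option.ext fun z ↦ ?_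
  simp only [pComp_eq_some_iff, hf.pInv_eq_some_iff]
  constructor
  · rintro ⟨y, hxy, x', hx'y, hx'z⟩
    rwa [hf hxy hx'y]
  · intro hxz
    obtain ⟨y, hxy⟩ := h ⟨z, hxz⟩
    exact ⟨y, hxy, x, hxy, hxz⟩

theorem pComp_pComp_pInv (h : pran g ⊆ pran f) : PComp (PComp g (PInv f)) f = g := by
  funext x
  refine Option.ext fun z ↦ ?_
  simp only [pComp_eq_some_iff]
  constructor
  · rintro ⟨y, ⟨w, hxw, hwy⟩, hyz⟩
    rw [hxw, ← apply_of_pInv_eq_some hwy, hyz]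
  · intro hxz
    obtain ⟨y, hzy⟩ := exists_pInv_eq_some (h ⟨x, hxz⟩)
    exact ⟨y, ⟨z, hxz, hzy⟩, apply_of_pInv_eq_some hzy⟩

theorem IOmap.exists_pComp_right_eq_iff [Std.Total r] [Std.Antisymm r]
    (hf : IOmap r f) (hg : IOmap r g) :
    (∃ χ, IOmap r χ ∧ PComp f χ = g) ↔ pdom g ⊆ pdom f := by
  constructor
  · rintro ⟨χ, -, rfl⟩
    exact pdom_pComp_subset f χ
  · exact fun h ↦ ⟨PComp (PInv f) g, hf.pInv.pComp hg, hf.1.pComp_pInv_pComp h⟩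

theorem IOmap.exists_pComp_left_eq_iff [Std.Total r] [Std.Antisymm r]
    (hf : IOmap r f) (hg : IOmap r g) :
    (∃ χ, IOmap r χ ∧ PComp χ f = g) ↔ pran g ⊆ pran f := by
  constructor
  · rintro ⟨χ, -, rfl⟩
    exact pran_pComp_subset χ f
  · exact fun h ↦ ⟨PComp g (PInv f), hg.pComp hf.pInv, pComp_pComp_pInv h⟩

end PartialMaps

theorem stmt5_general {X : Type*} {r : X → X → Prop} [Std.Total r] [Std.Antisymm r]
    {f g : X → Option X} (hf : IOmap r f) (hg : IOmap r g) :
    ((∃ χ χ', IOmap r χ ∧ IOmap r χ' ∧ PComp f χ = g ∧ PComp g χ' = f) ↔ pdom f = pdom g) ∧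
    ((∃ χ χ', IOmap r χ ∧ IOmap r χ' ∧ PComp χ f = g ∧ PComp χ' g = f) ↔ pran f = pran g) := by
  constructor
  · rw [Set.Subset.antisymm_iff, ← hg.exists_pComp_right_eq_iff hf,
      ← hf.exists_pComp_right_eq_iff hg]
    exact ⟨fun ⟨χ, χ', hχ, hχ', hfg, hgf⟩ ↦ ⟨⟨χ', hχ', hgf⟩, χ, hχ, hfg⟩,
      fun ⟨⟨χ', hχ', hgf⟩, χ, hχ, hfg⟩ ↦ ⟨χ, χ', hχ, hχ', hfg, hgf⟩⟩
  · rw [Set.Subset.antisymm_iff, ← hg.exists_pComp_left_eq_iff hf,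
      ← hf.exists_pComp_left_eq_iff hg]
    exact ⟨fun ⟨χ, χ', hχ, hχ', hfg, hgf⟩ ↦ ⟨⟨χ', hχ', hgf⟩, χ, hχ, hfg⟩,
      fun ⟨⟨χ', hχ', hgf⟩, χ, hχ, hfg⟩ ↦ ⟨χ, χ', hχ, hχ', hfg, hgf⟩⟩

theorem lexLe_iff_toLex_le {n : ℕ} {p q : Fin n × ℤ} : lexLe n p q ↔ toLex p ≤ toLex q :=
  Prod.Lex.toLex_le_toLex.symm

instance lexLe.instTotal (n : ℕ) : Std.Total (lexLe n) where
  total p q := by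
    simpa only [lexLe_iff_toLex_le] using le_total (toLex p) (toLex q)

instance lexLe.instAntisymm (n : ℕ) : Std.Antisymm (lexLe n) where
  antisymm _ _ hpq hqp :=
    toLex.injective (le_antisymm (lexLe_iff_toLex_le.1 hpq) (lexLe_iff_toLex_le.1 hqp))

/-- Green's relations `R` and `L` on `IO_∞(ℤ^n_lex)`: two elements are mutually right
divisible iff they have the same domain, and mutually left divisible iff they have the
same range (hence `α H β` iff `dom α = dom β` and `ran α = ran β`). -/
theorem stmt5 (n : ℕ) (hn : 0 < n) (f g : Fin n × ℤ → Option (Fin n × ℤ))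
    (hf : IOmap (lexLe n) f) (hg : IOmap (lexLe n) g) :
    ((∃ χ χ', IOmap (lexLe n) χ ∧ IOmap (lexLe n) χ' ∧ PComp f χ = g ∧ PComp g χ' = f)
       ↔ pdom f = pdom g) ∧
    ((∃ χ χ', IOmap (lexLe n) χ ∧ IOmap (lexLe n) χ' ∧ PComp χ f = g ∧ PComp χ' g = f)
       ↔ pran f = pran g) :=
  stmt5_general hf hg
end

section
/- Let n be a positive integer. For all idempotents ε, φ ∈ IO_∞(ℤ^n_lex) there exist infinitely many pairs (α, β) of elements of IO_∞(ℤ^n_lex) such that α·β = ε and β·α = φ. -/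
/-!
The idempotents of `IO_∞` are the identities of cofinite sets, so it suffices to find, for cofinite
sets `A` and `B`, infinitely many order isomorphisms `φ : A ≃ B`: each gives a solution `(φ, φ⁻¹)`.
Every fibre of a cofinite `A ⊆ ι × ℤ` is a cofinite subset of `ℤ`, hence isomorphic to `ℤ`, so `A`
and `B` are both isomorphic to `ι ×_lex ℤ`, whose fibrewise translations are automorphisms.
-/

section PartialMap

variable {X Y : Type*} {r : X → X → Prop} {e : X → Option X}

theorem pInj_pequiv (f : X ≃. X) : PInj f :=
  fun _ _ _ hx hy => f.inj hx hy

theorem ranCof_iff_domCof_symm (f : X ≃. X) : RanCof f ↔ DomCof f.symm := by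
  simp only [RanCof, DomCof, Option.eq_none_iff_forall_ne_some, ne_eq, f.eq_some_iff]

theorem eq_of_apply_eq_some_of_idempotent (he : PInj e) (hee : PComp e e = e) {x y : X}
    (hxy : e x = some y) : y = x := by
  have hy : e y = some y := by
    rw [← hxy]
    simpa only [PComp, hxy, Option.bind_some] using congrFun hee x
  exact he hy hxy

open Classical in
theorem exists_eq_ofSet_of_idempotent (he : PInj e) (hdom : DomCof e) (hee : PComp e e = e) :
    ∃ A : Set X, Aᶜ.Finite ∧ e = PEquiv.ofSet A := by
  refine ⟨{x | e x ≠ none}, hdom.subset fun x hx => not_not.mp hx, ?_⟩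
  ext x y
  rw [PEquiv.ofSet_eq_some_iff]
  constructor
  · intro hxy
    obtain rfl := eq_of_apply_eq_some_of_idempotent he hee hxy
    exact ⟨rfl, by simp [hxy]⟩
  · rintro ⟨rfl, hx⟩
    obtain ⟨z, hz⟩ := Option.ne_none_iff_exists'.mp hx
    rwa [eq_of_apply_eq_some_of_idempotent he hee hz] at hz

open Classical in
/-- The partial equivalence from `X` to `Y` with domain `A` and range `B` given by a bijection
`A ≃ B`; it turns isomorphisms between cofinite subsets into elements of `IO_∞`. -/
noncomputable def subtypeToPEquiv {A : Set X} {B : Set Y} (φ : A ≃ B) : X ≃. Y where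
  toFun x := if hx : x ∈ A then some (φ ⟨x, hx⟩) else none
  invFun y := if hy : y ∈ B then some (φ.symm ⟨y, hy⟩) else none
  inv x y := by
    simp only [Option.dite_none_right_eq_some, Option.some.injEq]
    constructor
    · rintro ⟨hy, rfl⟩
      simp
    · rintro ⟨hx, rfl⟩
      simp

section

variable {A : Set X} {B : Set Y} {φ : A ≃ B}

theorem subtypeToPEquiv_eq_some_iff {x : X} {y : Y} :
    subtypeToPEquiv φ x = some y ↔ ∃ hx : x ∈ A, φ ⟨x, hx⟩ = y := by
  simp [subtypeToPEquiv]

theorem subtypeToPEquiv_eq_none_iff {x : X} : subtypeToPEquiv φ x = none ↔ x ∉ A := by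
  simp [subtypeToPEquiv]

theorem subtypeToPEquiv_symm : (subtypeToPEquiv φ).symm = subtypeToPEquiv φ.symm :=
  rfl

theorem subtypeToPEquiv_injective :
    Function.Injective (subtypeToPEquiv : A ≃ B → X ≃. Y) := by
  intro φ ψ h
  ext x
  have hx : subtypeToPEquiv ψ x = some (φ x : Y) := by
    rw [← h, subtypeToPEquiv_eq_some_iff]
    exact ⟨x.2, rfl⟩
  obtain ⟨_, hψ⟩ := subtypeToPEquiv_eq_some_iff.mp hx
  exact hψ.symm

open Classical in
theorem subtypeToPEquiv_trans_symm :
    (subtypeToPEquiv φ).trans (subtypeToPEquiv φ).symm = PEquiv.ofSet A := by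
  have dom_eq : {x | (subtypeToPEquiv φ x).isSome} = A := by
    ext x
    simp [Option.isSome_iff_ne_none, subtypeToPEquiv_eq_none_iff]
  simp only [PEquiv.self_trans_symm, dom_eq]

end

section

variable {A B : Set X}

theorem domCof_subtypeToPEquiv {φ : A ≃ B} (hA : Aᶜ.Finite) : DomCof (subtypeToPEquiv φ) :=
  hA.subset fun _ hx => subtypeToPEquiv_eq_none_iff.mp hx

theorem ioMap_subtypeToPEquiv (hA : Aᶜ.Finite) (hB : Bᶜ.Finite)
    (φ : Subrel r (· ∈ A) ≃r Subrel r (· ∈ B)) : IOmap r (subtypeToPEquiv φ.toEquiv) := by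
  refine ⟨pInj_pequiv _, ?_, domCof_subtypeToPEquiv hA, ?_⟩
  · intro x y a b hxy hx hy
    obtain ⟨hxA, rfl⟩ := subtypeToPEquiv_eq_some_iff.mp hx
    obtain ⟨hyA, rfl⟩ := subtypeToPEquiv_eq_some_iff.mp hy
    exact φ.map_rel_iff.mpr (show Subrel r (· ∈ A) ⟨x, hxA⟩ ⟨y, hyA⟩ from hxy)
  · rw [ranCof_iff_domCof_symm, subtypeToPEquiv_symm]
    exact domCof_subtypeToPEquiv hB

open Classical in
theorem infinite_setOf_pComp_eq_ofSet (hA : Aᶜ.Finite) (hB : Bᶜ.Finite)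
    [Infinite (Subrel r (· ∈ A) ≃r Subrel r (· ∈ B))] :
    {q : (X → Option X) × (X → Option X) | IOmap r q.1 ∧ IOmap r q.2 ∧
      PComp q.1 q.2 = PEquiv.ofSet A ∧ PComp q.2 q.1 = PEquiv.ofSet B}.Infinite := by
  refine Set.infinite_of_injective_forall_mem
    (f := fun φ : Subrel r (· ∈ A) ≃r Subrel r (· ∈ B) =>
      ((subtypeToPEquiv φ.toEquiv : X → Option X), (subtypeToPEquiv φ.symm.toEquiv : X → Option X)))
    ?_ fun φ => ⟨ioMap_subtypeToPEquiv hA hB φ, ioMap_subtypeToPEquiv hB hA φ.symm,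
      congrArg DFunLike.coe subtypeToPEquiv_trans_symm,
      congrArg DFunLike.coe subtypeToPEquiv_trans_symm⟩
  intro φ ψ h
  exact RelIso.toEquiv_injective
    (subtypeToPEquiv_injective (DFunLike.coe_injective (congrArg Prod.fst h)))

end

end PartialMap

section Cofinite

theorem nonempty_orderIso_int_of_finite_compl {α : Type*} [LinearOrder α] [LocallyFiniteOrder α]
    [NoMaxOrder α] [NoMinOrder α] [Nonempty α] {S : Set α} (hS : Sᶜ.Finite) :
    Nonempty (S ≃o ℤ) := by
  classical
  have exists_gt (a : α) : ∃ b : S, a < b := by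
    obtain ⟨b, hab, hb⟩ := (Set.Ioi_infinite a).exists_notMem_finite hS
    exact ⟨⟨b, not_not.mp hb⟩, hab⟩
  have exists_lt (a : α) : ∃ b : S, b < a := by
    obtain ⟨b, hba, hb⟩ := (Set.Iio_infinite a).exists_notMem_finite hS
    exact ⟨⟨b, not_not.mp hb⟩, hba⟩
  have : Nonempty S := ⟨(exists_gt (Classical.arbitrary α)).choose⟩
  have : NoMaxOrder S := ⟨fun a => exists_gt a⟩
  have : NoMinOrder S := ⟨fun a => exists_lt a⟩
  let := LinearLocallyFiniteOrder.succOrder S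
  let := LinearLocallyFiniteOrder.predOrder S
  exact ⟨orderIsoIntOfLinearSuccPredArch⟩

variable {ι α β : Type*} {r : ι → ι → Prop}

/-- A subset of `ι × α` whose fibres over `ι` are all isomorphic to `β` is isomorphic, in the
lexicographic relation, to `ι × β`. -/
def prodLexIsoOfFiberIso {s : α → α → Prop} {t : β → β → Prop} {S : Set (ι × α)}
    (g : ∀ i, Subrel s (· ∈ Prod.mk i ⁻¹' S) ≃r t) :
    Subrel (Prod.Lex r s) (· ∈ S) ≃r Prod.Lex r t where
  toFun x := (x.1.1, g x.1.1 ⟨x.1.2, x.2⟩)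
  invFun y := ⟨(y.1, (g y.1).symm y.2), ((g y.1).symm y.2).2⟩
  left_inv x := by simp
  right_inv y := by simp
  map_rel_iff' := by
    rintro ⟨⟨i, a⟩, ha⟩ ⟨⟨j, b⟩, hb⟩
    simp only [Equiv.coe_fn_mk, subrel_val, Prod.lex_def]
    refine or_congr_right (and_congr_right ?_)
    rintro rfl
    exact (g i).map_rel_iff

theorem nonempty_relIso_prodLex_int_of_finite_compl {S : Set (ι × ℤ)} (hS : Sᶜ.Finite) :
    Nonempty (Subrel (Prod.Lex r (· ≤ ·)) (· ∈ S) ≃r Prod.Lex r ((· ≤ ·) : ℤ → ℤ → Prop)) := by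
  have fiber_iso (i : ι) : Nonempty ((Prod.mk i ⁻¹' S : Set ℤ) ≃o ℤ) :=
    nonempty_orderIso_int_of_finite_compl (hS.preimage (Prod.mk_right_injective i).injOn)
  exact ⟨prodLexIsoOfFiberIso fun i => (fiber_iso i).some⟩

instance infinite_orderIso_self [AddCommGroup α] [PartialOrder α] [IsOrderedAddMonoid α]
    [Infinite α] : Infinite (α ≃o α) :=
  Infinite.of_injective (OrderIso.addRight : α → α ≃o α) fun a b h => by
    simpa using DFunLike.congr_fun h 0

instance infinite_relIso_prodLex_self [Nonempty ι] {s : α → α → Prop} [Infinite (s ≃r s)] :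
    Infinite (Prod.Lex r s ≃r Prod.Lex r s) :=
  Infinite.of_injective (RelIso.prodLexCongr (RelIso.refl r)) fun f g h => by
    ext a
    exact congrArg Prod.snd (DFunLike.congr_fun h (Classical.arbitrary ι, a))

theorem infinite_relIso_of_finite_compl [Nonempty ι] {A B : Set (ι × ℤ)} (hA : Aᶜ.Finite)
    (hB : Bᶜ.Finite) :
    Infinite (Subrel (Prod.Lex r (· ≤ ·)) (· ∈ A) ≃r Subrel (Prod.Lex r (· ≤ ·)) (· ∈ B)) := by
  obtain ⟨f⟩ := nonempty_relIso_prodLex_int_of_finite_compl (r := r) hA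
  obtain ⟨g⟩ := nonempty_relIso_prodLex_int_of_finite_compl (r := r) hB
  refine Infinite.of_injective
    (fun τ : Prod.Lex r ((· ≤ ·) : ℤ → ℤ → Prop) ≃r Prod.Lex r (· ≤ ·) =>
      (f.trans τ).trans g.symm) fun σ τ h => ?_
  ext1 x
  simpa using DFunLike.congr_fun h (f.symm x)

end Cofinite

theorem stmt6_general {ι : Type*} [Nonempty ι] (r : ι → ι → Prop)
    (e p : ι × ℤ → Option (ι × ℤ))
    (he : IOmap (Prod.Lex r (· ≤ ·)) e) (hp : IOmap (Prod.Lex r (· ≤ ·)) p)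
    (hee : PComp e e = e) (hpp : PComp p p = p) :
    {q : (ι × ℤ → Option (ι × ℤ)) × (ι × ℤ → Option (ι × ℤ)) |
      IOmap (Prod.Lex r (· ≤ ·)) q.1 ∧ IOmap (Prod.Lex r (· ≤ ·)) q.2 ∧
      PComp q.1 q.2 = e ∧ PComp q.2 q.1 = p}.Infinite := by
  obtain ⟨heInj, -, heDom, -⟩ := he
  obtain ⟨hpInj, -, hpDom, -⟩ := hp
  obtain ⟨A, hA, rfl⟩ := exists_eq_ofSet_of_idempotent heInj heDom hee
  obtain ⟨B, hB, rfl⟩ := exists_eq_ofSet_of_idempotent hpInj hpDom hpp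
  have := infinite_relIso_of_finite_compl (r := r) hA hB
  exact infinite_setOf_pComp_eq_ofSet hA hB

/-- For all idempotents `ε, φ` of `IO_∞(ℤ^n_lex)` there exist infinitely many pairs
`(α, β)` of elements of `IO_∞(ℤ^n_lex)` with `α·β = ε` and `β·α = φ`. -/
theorem stmt6 (n : ℕ) (hn : 0 < n) (e p : Fin n × ℤ → Option (Fin n × ℤ))
    (he : IOmap (lexLe n) e) (hp : IOmap (lexLe n) p)
    (hee : PComp e e = e) (hpp : PComp p p = p) :
    {q : (Fin n × ℤ → Option (Fin n × ℤ)) × (Fin n × ℤ → Option (Fin n × ℤ)) |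
      IOmap (lexLe n) q.1 ∧ IOmap (lexLe n) q.2 ∧
      PComp q.1 q.2 = e ∧ PComp q.2 q.1 = p}.Infinite := by
  have : Nonempty (Fin n) := ⟨⟨0, hn⟩⟩
  simp only [lexLe_eq_prodLex] at he hp ⊢
  exact stmt6_general (· < ·) e p he hp hee hpp
end

section
/- Let n be a positive integer and let α be an injective monotone partial selfmap of L_n ×_lex ℤ all of whose values preserve the first coordinate (write α(i,k) = (i, α^i(k)) when (i,k) ∈ dom α). Then α has cofinite domain and cofinite image (i.e., α ∈ IO_∞(ℤ^n_lex)) if and only if there exist integers d_α and u_α such that for every i ∈ {1,…,n}: for all integers k ≤ d_α, both (i,k−1) and (i,k) lie in dom α and α^i(k−1) = α^i(k) − 1, and for all integers l ≥ u_α, both (i,l) and (i,l+1) lie in dom α and α^i(l+1) = α^i(l) + 1. Moreover, α is a unit of IO_∞(ℤ^n_lex) (dom α = ran α = L_n × ℤ) if and only if for every i ∈ {1,…,n} and every integer m, (i,m) ∈ dom α and α^i(m+1) = α^i(m) + 1. -/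
/-!
Call `p` a step of `f` if `f` sends `p` and its successor on the same line to a point and the
successor of that point. If `f p = some q` and `p` is not a step, then either the successor of `p`
is missing from the domain or, `f` being strictly monotone on the line, the successor of `q` is
missing from the range. As `f` is injective, each missing point is responsible for at most two
non-steps, so a cofinite map has only finitely many of them, and a total surjective one has none.
Conversely, on a ray made of steps `f` is a translation, so its values again fill a ray.
-/

section PartialMap

variable {X : Type*} {f : X → Option X}

theorem domCof_iff : DomCof f ↔ (pdom f)ᶜ.Finite := by
  have h : {x | f x = none} = (pdom f)ᶜ := by
    ext x
    simp [pdom, Option.eq_none_iff_forall_ne_some]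
  rw [DomCof, h]

theorem ranCof_iff : RanCof f ↔ (pran f)ᶜ.Finite := by
  have h : {y | ∀ x, f x ≠ some y} = (pran f)ᶜ := by
    ext y
    simp [pran]
  rw [RanCof, h]

theorem PInj.finite_preimage (hinj : PInj f) {S : Set X} (hS : S.Finite) :
    (f ⁻¹' (some '' S)).Finite := by
  refine (hS.image some).preimage ?_
  rintro x ⟨a, -, ha⟩ y - hxy
  exact hinj ha.symm (hxy ▸ ha.symm)

end PartialMap

section Lines

variable {ι : Type*} {f : ι × ℤ → Option (ι × ℤ)}

/-- The order on `ι × ℤ` as the disjoint union of the lines `{i} × ℤ`: unlike for `lexLe`, points on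
different lines are incomparable, so the index set `ι` need not be ordered. -/
def lineLe (p q : ι × ℤ) : Prop := p.1 = q.1 ∧ p.2 ≤ q.2

/-- A partial selfmap of `ι × ℤ` preserving the first coordinate, that is, mapping each line
`{i} × ℤ` into itself. -/
def PresFst (f : ι × ℤ → Option (ι × ℤ)) : Prop := ∀ ⦃p q⦄, f p = some q → q.1 = p.1

/-- The successor of a point on its line. -/
def lineSucc (p : ι × ℤ) : ι × ℤ := (p.1, p.2 + 1)

/-- The points at which a partial selfmap of `ι × ℤ` commutes with `lineSucc`, being defined both
there and at the successor: locally, the map is a translation. -/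
def stepSet (f : ι × ℤ → Option (ι × ℤ)) : Set (ι × ℤ) :=
  {p | ∃ q, f p = some q ∧ f (lineSucc p) = some (lineSucc q)}

theorem lineSucc_injective : Function.Injective (lineSucc : ι × ℤ → ι × ℤ) := by
  intro p q h
  simpa [lineSucc, Prod.ext_iff] using h

theorem finite_of_finite_lines [Finite ι] {S : Set (ι × ℤ)}
    (h : ∀ i, (Prod.mk i ⁻¹' S).Finite) : S.Finite :=
  (Set.finite_iUnion fun i => (h i).image (Prod.mk i)).subset fun p hp =>
    Set.mem_iUnion.2 ⟨p.1, p.2, hp, rfl⟩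

theorem finite_compl_iff_exists_rays [Finite ι] {S : Set (ι × ℤ)} :
    Sᶜ.Finite ↔ ∃ d u : ℤ, ∀ i,
      (∀ k, k ≤ d → (i, k - 1) ∈ S) ∧ ∀ l, u ≤ l → (i, l) ∈ S := by
  constructor
  · intro hS
    obtain ⟨d, hd⟩ := (hS.image Prod.snd).bddBelow
    obtain ⟨u, hu⟩ := (hS.image Prod.snd).bddAbove
    refine ⟨d, u + 1, fun i => ⟨fun k hk => ?_, fun l hl => ?_⟩⟩
    · by_contra hmem
      have : d ≤ k - 1 := hd ⟨_, hmem, rfl⟩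
      omega
    · by_contra hmem
      have : l ≤ u := hu ⟨_, hmem, rfl⟩
      omega
  · rintro ⟨d, u, h⟩
    refine finite_of_finite_lines fun i => (Set.finite_Ico d u).subset fun k hk => ⟨?_, ?_⟩
    · by_contra! hlt
      exact hk (by simpa using (h i).1 (k + 1) hlt)
    · by_contra! hle
      exact hk ((h i).2 k hle)

theorem stepSet_subset_pdom : stepSet f ⊆ pdom f := fun _ ⟨q, hq, _⟩ => ⟨q, hq⟩

theorem PresFst.mem_stepSet_iff (hpres : PresFst f) {i : ι} {m : ℤ} :
    (i, m) ∈ stepSet f ↔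
      ∃ a b : ℤ, f (i, m) = some (i, a) ∧ f (i, m + 1) = some (i, b) ∧ b = a + 1 := by
  constructor
  · rintro ⟨⟨j, a⟩, hm, hsucc⟩
    obtain rfl : j = i := hpres hm
    exact ⟨a, a + 1, hm, hsucc, rfl⟩
  · rintro ⟨a, _, hm, hsucc, rfl⟩
    exact ⟨(i, a), hm, hsucc⟩

theorem PresFst.sub_one_mem_stepSet_iff (hpres : PresFst f) {i : ι} {k : ℤ} :
    (i, k - 1) ∈ stepSet f ↔
      ∃ a b : ℤ, f (i, k - 1) = some (i, a) ∧ f (i, k) = some (i, b) ∧ a = b - 1 := by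
  simp only [hpres.mem_stepSet_iff, sub_add_cancel, eq_sub_iff_add_eq, eq_comm]

theorem PInj.snd_lt_snd (hinj : PInj f) (hmono : PMono lineLe f) {p p' q q' : ι × ℤ}
    (hfst : p.1 = p'.1) (hlt : p.2 < p'.2) (hp : f p = some q) (hp' : f p' = some q') :
    q.2 < q'.2 := by
  obtain ⟨hfst', hle⟩ := hmono ⟨hfst, hlt.le⟩ hp hp'
  refine hle.lt_of_ne fun heq => hlt.ne ?_
  obtain rfl : q = q' := Prod.ext hfst' heq
  rw [hinj hp hp']

theorem mem_stepSet_of_mem_pran (hinj : PInj f) (hmono : PMono lineLe f) (hpres : PresFst f)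
    {p q : ι × ℤ} (hp : f p = some q) (hdom : lineSucc p ∈ pdom f) (hran : lineSucc q ∈ pran f) :
    p ∈ stepSet f := by
  obtain ⟨r, hr⟩ := hdom
  obtain ⟨x, hx⟩ := hran
  have hqp : q.1 = p.1 := hpres hp
  have hxp : x.1 = p.1 := (hpres hx).symm.trans hqp
  have hqr : q.2 < r.2 :=
    hinj.snd_lt_snd hmono (p := p) (p' := lineSucc p) rfl (lt_add_one p.2) hp hr
  have hpx : p.2 < x.2 := by
    by_contra! hle
    exact (lt_add_one q.2).not_ge (hmono ⟨hxp, hle⟩ hx hp).2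
  have hsucc : lineLe (lineSucc p) x := ⟨hxp.symm, hpx⟩
  obtain ⟨hfst, hrq⟩ : lineLe r (lineSucc q) := hmono hsucc hr hx
  obtain rfl : r = lineSucc q := Prod.ext hfst (hrq.antisymm hqr)
  exact ⟨q, hp, hr⟩

theorem compl_stepSet_subset (hinj : PInj f) (hmono : PMono lineLe f) (hpres : PresFst f) :
    (stepSet f)ᶜ ⊆ (pdom f)ᶜ ∪ lineSucc ⁻¹' (pdom f)ᶜ ∪
      f ⁻¹' (some '' (lineSucc ⁻¹' (pran f)ᶜ)) := by
  intro p hstep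
  by_cases hp : p ∈ pdom f
  · by_cases hsucc : lineSucc p ∈ pdom f
    · obtain ⟨q, hq⟩ := hp
      exact Or.inr ⟨q, fun hran => hstep (mem_stepSet_of_mem_pran hinj hmono hpres hq hsucc hran),
        hq.symm⟩
    · exact Or.inl (Or.inr hsucc)
  · exact Or.inl (Or.inl hp)

theorem mem_pran_of_le {p q : ι × ℤ} (hp : f p = some q)
    (hstep : ∀ l, p.2 ≤ l → (p.1, l) ∈ stepSet f) {k : ℤ} (hk : q.2 ≤ k) :
    (q.1, k) ∈ pran f := by
  suffices ∃ l, p.2 ≤ l ∧ f (p.1, l) = some (q.1, k) from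
    let ⟨l, _, hl⟩ := this
    ⟨_, hl⟩
  induction k, hk using Int.leInduction with
  | base => exact ⟨p.2, le_rfl, hp⟩
  | succ k _ ih =>
    obtain ⟨l, hle, hl⟩ := ih
    obtain ⟨r, hr, hsucc⟩ := hstep l hle
    obtain rfl : (q.1, k) = r := Option.some.inj (hl.symm.trans hr)
    exact ⟨l + 1, by omega, hsucc⟩

theorem mem_pran_of_ge {p q : ι × ℤ} (hp : f p = some q)
    (hstep : ∀ l, l < p.2 → (p.1, l) ∈ stepSet f) {k : ℤ} (hk : k ≤ q.2) :
    (q.1, k) ∈ pran f := by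
  suffices ∃ l, l ≤ p.2 ∧ f (p.1, l) = some (q.1, k) from
    let ⟨l, _, hl⟩ := this
    ⟨_, hl⟩
  induction k, hk using Int.leInductionDown with
  | base => exact ⟨p.2, le_rfl, hp⟩
  | pred k _ ih =>
    obtain ⟨l, hle, hl⟩ := ih
    obtain ⟨r, hr, hsucc⟩ := hstep (l - 1) (by omega)
    have hrk : lineSucc r = (q.1, k) := by
      simpa [lineSucc, hl, eq_comm] using hsucc
    obtain rfl : r = (q.1, k - 1) := lineSucc_injective (by rw [hrk]; simp [lineSucc])
    exact ⟨l - 1, by omega, hr⟩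

theorem PresFst.finite_compl_pran [Finite ι] (hpres : PresFst f) (hstep : (stepSet f)ᶜ.Finite) :
    (pran f)ᶜ.Finite := by
  obtain ⟨d, u, h⟩ := finite_compl_iff_exists_rays.1 hstep
  refine finite_of_finite_lines fun i => ?_
  obtain ⟨⟨j, a⟩, ha⟩ := stepSet_subset_pdom ((h i).1 d le_rfl)
  obtain ⟨⟨j', b⟩, hb⟩ := stepSet_subset_pdom ((h i).2 u le_rfl)
  obtain rfl : j = i := hpres ha
  obtain rfl : j' = j := hpres hb
  refine (Set.finite_Icc a b).subset fun k hk => ⟨?_, ?_⟩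
  · by_contra! hlt
    refine hk (mem_pran_of_ge ha (fun l (hl : l < d - 1) => ?_) hlt.le)
    simpa using (h j').1 (l + 1) (by omega)
  · by_contra! hlt
    exact hk (mem_pran_of_le hb (h j').2 hlt.le)

theorem domCof_and_ranCof_iff [Finite ι] (hinj : PInj f) (hmono : PMono lineLe f)
    (hpres : PresFst f) : DomCof f ∧ RanCof f ↔ (stepSet f)ᶜ.Finite := by
  rw [domCof_iff, ranCof_iff]
  constructor
  · rintro ⟨hdom, hran⟩
    have hsucc := hdom.preimage lineSucc_injective.injOn
    have hpre := hinj.finite_preimage (hran.preimage lineSucc_injective.injOn)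
    exact ((hdom.union hsucc).union hpre).subset (compl_stepSet_subset hinj hmono hpres)
  · intro hstep
    exact ⟨hstep.subset (Set.compl_subset_compl.2 stepSet_subset_pdom),
      hpres.finite_compl_pran hstep⟩

theorem pdom_eq_univ_and_pran_eq_univ_iff (hinj : PInj f) (hmono : PMono lineLe f)
    (hpres : PresFst f) :
    pdom f = Set.univ ∧ pran f = Set.univ ↔ ∀ p, p ∈ stepSet f := by
  simp only [Set.eq_univ_iff_forall]
  constructor
  · rintro ⟨hdom, hran⟩ p
    obtain ⟨q, hq⟩ := hdom p
    exact mem_stepSet_of_mem_pran hinj hmono hpres hq (hdom _) (hran _)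
  · refine fun hstep => ⟨fun p => stepSet_subset_pdom (hstep p), ?_⟩
    rintro ⟨i, k⟩
    obtain ⟨⟨j, a⟩, ha⟩ := stepSet_subset_pdom (hstep (i, 0))
    obtain rfl : j = i := hpres ha
    rcases le_total a k with hk | hk
    · exact mem_pran_of_le ha (fun _ _ => hstep _) hk
    · exact mem_pran_of_ge ha (fun _ _ => hstep _) hk

theorem stmt8_general [Finite ι] (hinj : PInj f) (hmono : PMono lineLe f) (hpres : PresFst f) :
    ((DomCof f ∧ RanCof f) ↔
      ∃ d u : ℤ, ∀ i : ι,
        (∀ k : ℤ, k ≤ d →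
          ∃ a b : ℤ, f (i, k - 1) = some (i, a) ∧ f (i, k) = some (i, b) ∧ a = b - 1) ∧
        (∀ l : ℤ, u ≤ l →
          ∃ a b : ℤ, f (i, l) = some (i, a) ∧ f (i, l + 1) = some (i, b) ∧ b = a + 1)) ∧
    ((pdom f = Set.univ ∧ pran f = Set.univ) ↔
      ∀ (i : ι) (m : ℤ),
        ∃ a b : ℤ, f (i, m) = some (i, a) ∧ f (i, m + 1) = some (i, b) ∧ b = a + 1) := by
  simp only [← hpres.sub_one_mem_stepSet_iff, ← hpres.mem_stepSet_iff]
  rw [domCof_and_ranCof_iff hinj hmono hpres, finite_compl_iff_exists_rays,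
    pdom_eq_univ_and_pran_eq_univ_iff hinj hmono hpres, Prod.forall]
  exact ⟨Iff.rfl, Iff.rfl⟩

end Lines

theorem PMono.lineLe_of_lexLe {n : ℕ} {f : Fin n × ℤ → Option (Fin n × ℤ)}
    (hmono : PMono (lexLe n) f) (hpres : PresFst f) : PMono lineLe f := by
  intro p q a b hpq ha hb
  have hab : a.1 = b.1 := (hpres ha).trans (hpq.1.trans (hpres hb).symm)
  exact (hmono (Or.inr hpq) ha hb).elim (fun hlt => absurd hab hlt.ne) id

/-- Characterization of the elements of `IO_∞(ℤ^n_lex)` among the injective monotone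
first-coordinate-preserving partial selfmaps of `L_n ×_lex ℤ`: cofiniteness of domain
and image is equivalent to being an eventual translation on each end of every line;
moreover such a map is a unit iff it is everywhere defined and a translation on
every line. -/
theorem stmt8 (n : ℕ) (hn : 0 < n) (f : Fin n × ℤ → Option (Fin n × ℤ))
    (hinj : PInj f) (hmono : PMono (lexLe n) f)
    (hpres : ∀ (i j : Fin n) (k m : ℤ), f (i, k) = some (j, m) → j = i) :
    ((DomCof f ∧ RanCof f) ↔
      ∃ d u : ℤ, ∀ i : Fin n,
        (∀ k : ℤ, k ≤ d →
          ∃ a b : ℤ, f (i, k - 1) = some (i, a) ∧ f (i, k) = some (i, b) ∧ a = b - 1) ∧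
        (∀ l : ℤ, u ≤ l →
          ∃ a b : ℤ, f (i, l) = some (i, a) ∧ f (i, l + 1) = some (i, b) ∧ b = a + 1)) ∧
    ((pdom f = Set.univ ∧ pran f = Set.univ) ↔
      ∀ (i : Fin n) (m : ℤ),
        ∃ a b : ℤ, f (i, m) = some (i, a) ∧ f (i, m + 1) = some (i, b) ∧ b = a + 1) := by
  have hpres' : PresFst f := fun p q h => hpres p.1 q.1 p.2 q.2 h
  exact stmt8_general hinj (hmono.lineLe_of_lexLe hpres') hpres'
end

section
/- For every positive integer n, the group of units of the monoid IO_∞(ℤ^n_lex) — that is, the group of all order automorphisms of L_n ×_lex ℤ under composition — is isomorphic to the direct power (ℤ(+))^n of the additive group of integers. -/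
/-!
In `ι ×ₗ ℤ` every point `(i, m)` has exactly one cover, `(i, m + 1)`. Order automorphisms preserve
covers, so they commute with the translation by one along the fibres, hence with the translation by
any integer. An automorphism therefore carries fibres to fibres by translations and induces an order
automorphism of `ι`. When the latter can only be the identity, as for `ι = Fin n`, the automorphism
is a fibrewise translation, given by one integer for each `i : ι`.
-/

theorem monotone_fst_apply_toLex {ι κ α β : Type*} [PartialOrder ι] [Preorder α] [Preorder κ]
    [Preorder β] {f : ι ×ₗ α → κ ×ₗ β} (hf : Monotone f) (a : α) :
    Monotone fun i => (ofLex (f (toLex (i, a)))).1 := fun _ _ hij =>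
  Prod.Lex.monotone_fst_ofLex (hf (Prod.Lex.toLex_mono (Prod.mk_le_mk.2 ⟨hij, le_rfl⟩)))

section Translation

variable {ι G : Type*} [Preorder ι] [AddGroup G] [Preorder G] [AddLeftMono G]

/-- The action of `ι → G` on the lexicographic product `ι ×ₗ G` by translations along the fibres:
`c` sends `(i, x)` to `(i, c i + x)`. -/
def fiberTranslation : Multiplicative (ι → G) →* ((ι ×ₗ G) ≃o (ι ×ₗ G)) where
  toFun c :=
    { toFun := fun p => toLex ((ofLex p).1, c.toAdd (ofLex p).1 + (ofLex p).2)
      invFun := fun p => toLex ((ofLex p).1, -c.toAdd (ofLex p).1 + (ofLex p).2)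
      left_inv := fun p => by simp
      right_inv := fun p => by simp
      map_rel_iff' := fun {p q} => by
        simp only [Equiv.coe_fn_mk, Prod.Lex.le_iff, ofLex_toLex]
        refine or_congr_right (and_congr_right fun hpq => ?_)
        rw [hpq, add_le_add_iff_left] }
  map_one' := by ext p; simp
  map_mul' c d := by ext p; simp [add_assoc]

theorem fiberTranslation_apply (c : Multiplicative (ι → G)) (p : ι ×ₗ G) :
    fiberTranslation c p = toLex ((ofLex p).1, c.toAdd (ofLex p).1 + (ofLex p).2) :=
  rfl

theorem fiberTranslation_injective :
    Function.Injective (fiberTranslation : Multiplicative (ι → G) →* _) := by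
  intro c d hcd
  ext i
  simpa [fiberTranslation_apply] using DFunLike.congr_fun hcd (toLex (i, 0))

end Translation

section Commute

variable {ι : Type*} [Preorder ι]

theorem covBy_iff_fiberTranslation_one_eq {p q : ι ×ₗ ℤ} :
    p ⋖ q ↔ fiberTranslation (.ofAdd 1) p = q := by
  simp [Prod.Lex.covBy_iff, fiberTranslation_apply, ← ofLex_inj, Prod.ext_iff,
    Order.covBy_iff_add_one_eq, add_comm]

theorem commute_fiberTranslation_one (f : (ι ×ₗ ℤ) ≃o (ι ×ₗ ℤ)) :
    Commute f (fiberTranslation (.ofAdd 1)) := by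
  refine RelIso.ext fun p => ?_
  have hp : p ⋖ fiberTranslation (.ofAdd 1) p := covBy_iff_fiberTranslation_one_eq.2 rfl
  exact (covBy_iff_fiberTranslation_one_eq.1 ((apply_covBy_apply_iff f).2 hp)).symm

theorem commute_fiberTranslation_const (f : (ι ×ₗ ℤ) ≃o (ι ×ₗ ℤ)) (m : ℤ) :
    Commute f (fiberTranslation (.ofAdd fun _ => m)) := by
  have hm : (fun _ => m : ι → ℤ) = m • 1 := by ext; simp
  rw [hm, ofAdd_zsmul, map_zpow]
  exact (commute_fiberTranslation_one f).zpow_right m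

theorem orderIso_apply_toLex (f : (ι ×ₗ ℤ) ≃o (ι ×ₗ ℤ)) (i : ι) (m : ℤ) :
    f (toLex (i, m)) =
      toLex ((ofLex (f (toLex (i, 0)))).1, m + (ofLex (f (toLex (i, 0)))).2) := by
  simpa [fiberTranslation_apply] using
    DFunLike.congr_fun (commute_fiberTranslation_const f m).eq (toLex (i, 0))

theorem fst_symm_apply_fst_apply (f : (ι ×ₗ ℤ) ≃o (ι ×ₗ ℤ)) (i : ι) :
    (ofLex (f.symm (toLex ((ofLex (f (toLex (i, 0)))).1, 0)))).1 = i := by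
  set q := f (toLex (i, 0))
  have hq : f.symm q = toLex (i, 0) := f.symm_apply_apply _
  have hfst : (ofLex (f.symm q)).1 = (ofLex (f.symm (toLex ((ofLex q).1, 0)))).1 :=
    congrArg (fun p => (ofLex p).1) (orderIso_apply_toLex f.symm (ofLex q).1 (ofLex q).2)
  rw [← hfst, hq, ofLex_toLex]

end Commute

section Automorphisms

variable {ι : Type*} [PartialOrder ι]

/-- The order automorphism of `ι` induced by an order automorphism of `ι ×ₗ ℤ` through its
permutation of the fibres, read off at the points `(i, 0)`. -/
def baseOrderIso (f : (ι ×ₗ ℤ) ≃o (ι ×ₗ ℤ)) : ι ≃o ι :=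
  Equiv.toOrderIso
    { toFun := fun i => (ofLex (f (toLex (i, 0)))).1
      invFun := fun i => (ofLex (f.symm (toLex (i, 0)))).1
      left_inv := fst_symm_apply_fst_apply f
      right_inv := fst_symm_apply_fst_apply f.symm }
    (monotone_fst_apply_toLex f.monotone 0) (monotone_fst_apply_toLex f.symm.monotone 0)

theorem fiberTranslation_eq_of_baseOrderIso_eq_refl {f : (ι ×ₗ ℤ) ≃o (ι ×ₗ ℤ)}
    (hf : baseOrderIso f = .refl ι) :
    fiberTranslation (.ofAdd fun i => (ofLex (f (toLex (i, 0)))).2) = f := by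
  refine RelIso.ext (toLex.surjective.forall.2 fun ⟨i, m⟩ => ?_)
  have hi : (ofLex (f (toLex (i, 0)))).1 = i := DFunLike.congr_fun hf i
  rw [orderIso_apply_toLex f i m, hi, add_comm m]
  rfl

theorem fiberTranslation_surjective [Subsingleton (ι ≃o ι)] :
    Function.Surjective (fiberTranslation : Multiplicative (ι → ℤ) →* _) := fun _ =>
  ⟨_, fiberTranslation_eq_of_baseOrderIso_eq_refl (Subsingleton.elim _ _)⟩

end Automorphisms

theorem stmt9_general {ι : Type*} [PartialOrder ι] [Subsingleton (ι ≃o ι)] :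
    ∃ e : ((ι ×ₗ ℤ) ≃o (ι ×ₗ ℤ)) ≃ (ι → ℤ),
      ∀ f g : (ι ×ₗ ℤ) ≃o (ι ×ₗ ℤ), e (f.trans g) = e f + e g := by
  let φ : Multiplicative (ι → ℤ) ≃* ((ι ×ₗ ℤ) ≃o (ι ×ₗ ℤ)) :=
    MulEquiv.ofBijective fiberTranslation ⟨fiberTranslation_injective, fiberTranslation_surjective⟩
  refine ⟨φ.symm.toEquiv.trans Multiplicative.toAdd, fun f g => ?_⟩
  calc (φ.symm (g * f)).toAdd = (φ.symm g).toAdd + (φ.symm f).toAdd := by rw [map_mul, toAdd_mul]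
    _ = (φ.symm f).toAdd + (φ.symm g).toAdd := add_comm _ _

/-- The group of units of `IO_∞(ℤ^n_lex)` — the group of all order automorphisms of
`L_n ×_lex ℤ` under composition — is isomorphic to the direct power `(ℤ(+))^n`. -/
theorem stmt9 (n : ℕ) (hn : 0 < n) :
    ∃ e : ((Fin n ×ₗ ℤ) ≃o (Fin n ×ₗ ℤ)) ≃ (Fin n → ℤ),
      ∀ f g : (Fin n ×ₗ ℤ) ≃o (Fin n ×ₗ ℤ), e (f.trans g) = e f + e g :=
  stmt9_general
end

section
/- Let n be a positive integer and α, β ∈ IO_∞(ℤ^n_lex). The following are equivalent: (1) there exists an idempotent ε ∈ IO_∞(ℤ^n_lex) such that α·ε = β·ε (i.e., α and β are equivalent under the least group congruence σ on the inverse semigroup IO_∞(ℤ^n_lex)); (2) there exist integers d and u such that for every i ∈ {1,…,n} and every integer k with k ≤ d or k ≥ u, (i,k) ∈ dom α, (i,k) ∈ dom β and α(i,k) = β(i,k). -/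
/-!
Once idempotents are known to be the partial identities of cofinite subsets `S`, the relation
`α·ε = β·ε` says that `α` and `β` take the same values in `S` at the same points. As `α` is
injective with cofinite domain, it takes values in `S` at all but finitely many points, so `α` and
`β` agree outside a finite set; conversely, removing the finitely many values at points of
disagreement yields a suitable `S`. A property holds outside a finite subset of `L_n × ℤ` exactly
when it holds at `(i, k)` for all `i` as soon as `k` leaves some bounded interval.
-/

section PartialSelfmap

open Filter

variable {X : Type*} {f g e : X → Option X} {x y : X}

/-- Two partial selfmaps agree at `x`: both are defined there, with the same value. (This is
stronger than `f x = g x`, which also holds where both are undefined.) -/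
def AgreeAt (f g : X → Option X) (x : X) : Prop := ∃ y, f x = some y ∧ g x = some y

open scoped Classical in
/-- The partial identity map of a subset `S`; for cofinite `S` these are the idempotents of the
monoid of all cofinite monotone partial selfmaps. -/
noncomputable def PIdOn (S : Set X) : X → Option X := fun x => if x ∈ S then some x else none

theorem pIdOn_eq_some {S : Set X} : PIdOn S x = some y ↔ x ∈ S ∧ x = y := by
  simp [PIdOn]

theorem pIdOn_eq_none {S : Set X} : PIdOn S x = none ↔ x ∉ S := by
  simp [PIdOn]

theorem pComp_eq_some : PComp f g x = some y ↔ ∃ z, f x = some z ∧ g z = some y :=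
  Option.bind_eq_some_iff

theorem pComp_pIdOn_eq_some {S : Set X} :
    PComp f (PIdOn S) x = some y ↔ f x = some y ∧ y ∈ S := by
  simp only [pComp_eq_some, pIdOn_eq_some]
  constructor
  · rintro ⟨_, hfx, hy, rfl⟩
    exact ⟨hfx, hy⟩
  · rintro ⟨hfx, hy⟩
    exact ⟨y, hfx, hy, rfl⟩

theorem pComp_pIdOn_eq_iff {S : Set X} :
    PComp f (PIdOn S) = PComp g (PIdOn S) ↔ ∀ x, ∀ y ∈ S, f x = some y ↔ g x = some y := by
  rw [funext_iff]
  refine forall_congr' fun x => ?_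
  rw [Option.ext_iff]
  simp only [pComp_pIdOn_eq_some, and_congr_left_iff]

theorem pComp_pIdOn_self (S : Set X) : PComp (PIdOn S) (PIdOn S) = PIdOn S := by
  ext x y
  rw [pComp_pIdOn_eq_some, pIdOn_eq_some]
  exact and_iff_left_of_imp fun ⟨hx, hxy⟩ => hxy ▸ hx

theorem PInj.eq_pIdOn_pdom (he : PInj e) (hee : PComp e e = e) : e = PIdOn (pdom e) := by
  have eq_of_eq_some {x y : X} (hxy : e x = some y) : x = y := by
    obtain ⟨z, hxz, hzy⟩ := pComp_eq_some.1 ((congrFun hee x).trans hxy)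
    obtain rfl : z = y := Option.some.inj (hxz.symm.trans hxy)
    exact he hxy hzy
  ext x y
  rw [pIdOn_eq_some]
  constructor
  · exact fun hxy => ⟨⟨y, hxy⟩, eq_of_eq_some hxy⟩
  · rintro ⟨⟨z, hxz⟩, rfl⟩
    rwa [← eq_of_eq_some hxz] at hxz

theorem domCof_pIdOn_iff {S : Set X} : DomCof (PIdOn S) ↔ Sᶜ.Finite := by
  simp only [DomCof, pIdOn_eq_none, Set.compl_def]

theorem iomap_pIdOn (r : X → X → Prop) {S : Set X} (hS : Sᶜ.Finite) : IOmap r (PIdOn S) := by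
  simp only [IOmap, PInj, PMono, pIdOn_eq_some]
  refine ⟨?_, ?_, domCof_pIdOn_iff.2 hS, ?_⟩
  · rintro x y a ⟨-, rfl⟩ ⟨-, rfl⟩
    rfl
  · rintro x y a b hxy ⟨-, rfl⟩ ⟨-, rfl⟩
    exact hxy
  · exact hS.subset fun y hy hyS => hy y (pIdOn_eq_some.2 ⟨hyS, rfl⟩)

theorem exists_idempotent_pComp_eq_iff (r : X → X → Prop) :
    (∃ e, IOmap r e ∧ PComp e e = e ∧ PComp f e = PComp g e) ↔
      ∃ S : Set X, Sᶜ.Finite ∧ ∀ x, ∀ y ∈ S, f x = some y ↔ g x = some y := by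
  constructor
  · rintro ⟨e, ⟨e_inj, -, e_dom, -⟩, hee, hfg⟩
    have he := e_inj.eq_pIdOn_pdom hee
    rw [he] at e_dom hfg
    exact ⟨pdom e, domCof_pIdOn_iff.1 e_dom, pComp_pIdOn_eq_iff.1 hfg⟩
  · rintro ⟨S, hS, hfg⟩
    exact ⟨PIdOn S, iomap_pIdOn r hS, pComp_pIdOn_self S, pComp_pIdOn_eq_iff.2 hfg⟩

theorem PInj.finite_preimage_some_image (hf : PInj f) {T : Set X} (hT : T.Finite) :
    (f ⁻¹' (some '' T)).Finite := by
  refine (hT.image some).preimage ?_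
  rintro x ⟨a, -, hx⟩ y - hxy
  exact hf hx.symm (hxy.symm.trans hx.symm)

theorem PInj.eventually_agreeAt (hf : PInj f) (f_dom : DomCof f) {S : Set X} (hS : Sᶜ.Finite)
    (hfg : ∀ x, ∀ y ∈ S, f x = some y ↔ g x = some y) : ∀ᶠ x in cofinite, AgreeAt f g x := by
  filter_upwards [f_dom.eventually_cofinite_notMem,
    (hf.finite_preimage_some_image hS).eventually_cofinite_notMem] with x x_dom x_val
  obtain ⟨y, hy⟩ := Option.ne_none_iff_exists'.1 x_dom
  have hyS : y ∈ S := by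
    by_contra hyS
    exact x_val ⟨y, hyS, hy.symm⟩
  exact ⟨y, hy, (hfg x y hyS).1 hy⟩

theorem exists_compl_finite_of_eventually_agreeAt (hfg : ∀ᶠ x in cofinite, AgreeAt f g x) :
    ∃ S : Set X, Sᶜ.Finite ∧ ∀ x, ∀ y ∈ S, f x = some y ↔ g x = some y := by
  let B : Set X := {x | ¬ AgreeAt f g x}
  have hB : B.Finite := hfg
  refine ⟨(some ⁻¹' (f '' B ∪ g '' B))ᶜ, ?_, fun x y hy => ?_⟩
  · rw [compl_compl]
    exact ((hB.image f).union (hB.image g)).preimage (Option.some_injective X).injOn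
  · by_cases hx : AgreeAt f g x
    · obtain ⟨z, hfz, hgz⟩ := hx
      rw [hfz, hgz]
    · exact ⟨fun h => (hy (.inl ⟨x, hx, h⟩)).elim, fun h => (hy (.inr ⟨x, hx, h⟩)).elim⟩

theorem exists_idempotent_pComp_eq_iff_eventually_agreeAt (r : X → X → Prop) (hf : PInj f)
    (f_dom : DomCof f) :
    (∃ e, IOmap r e ∧ PComp e e = e ∧ PComp f e = PComp g e) ↔
      ∀ᶠ x in cofinite, AgreeAt f g x := by
  rw [exists_idempotent_pComp_eq_iff]
  exact ⟨fun ⟨_, hS, hfg⟩ => hf.eventually_agreeAt f_dom hS hfg,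
    exists_compl_finite_of_eventually_agreeAt⟩

theorem cofinite_prod_int_eq_comap_snd (ι : Type*) [Finite ι] :
    (cofinite : Filter (ι × ℤ)) = comap Prod.snd (atBot ⊔ atTop) := by
  rw [← coprod_cofinite, Filter.coprod, cofinite_eq_bot, comap_bot, bot_sup_eq, Int.cofinite_eq]

theorem eventually_cofinite_prod_int_iff {ι : Type*} [Finite ι] {p : ι × ℤ → Prop} :
    (∀ᶠ x in cofinite, p x) ↔ ∃ d u : ℤ, ∀ i k, k ≤ d ∨ u ≤ k → p (i, k) := by
  simp only [cofinite_prod_int_eq_comap_snd, eventually_comap, eventually_sup, eventually_atBot,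
    eventually_atTop, Prod.forall]
  constructor
  · rintro ⟨⟨d, hd⟩, u, hu⟩
    exact ⟨d, u, fun i k hk => hk.elim (hd k · i k rfl) (hu k · i k rfl)⟩
  · rintro ⟨d, u, h⟩
    exact ⟨⟨d, fun _ hk i _ hik => h i _ (.inl (hik ▸ hk))⟩,
      u, fun _ hk i _ hik => h i _ (.inr (hik ▸ hk))⟩

theorem stmt12_general {ι : Type*} [Finite ι] (r : ι × ℤ → ι × ℤ → Prop)
    {f g : ι × ℤ → Option (ι × ℤ)} (hf : PInj f) (f_dom : DomCof f) :
    (∃ e, IOmap r e ∧ PComp e e = e ∧ PComp f e = PComp g e) ↔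
      ∃ d u : ℤ, ∀ i k, k ≤ d ∨ u ≤ k → ∃ y, f (i, k) = some y ∧ g (i, k) = some y :=
  (exists_idempotent_pComp_eq_iff_eventually_agreeAt r hf f_dom).trans
    eventually_cofinite_prod_int_iff

end PartialSelfmap

/-- Two elements of `IO_∞(ℤ^n_lex)` are equivalent under the least group congruence `σ`
(`α σ β` iff `α·ε = β·ε` for some idempotent `ε`) iff they are defined and agree on
`(i,k)` for all sufficiently small and all sufficiently large `k`. -/
theorem stmt12 (n : ℕ) (hn : 0 < n) (f g : Fin n × ℤ → Option (Fin n × ℤ))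
    (hf : IOmap (lexLe n) f) (hg : IOmap (lexLe n) g) :
    (∃ e, IOmap (lexLe n) e ∧ PComp e e = e ∧ PComp f e = PComp g e) ↔
    ∃ d u : ℤ, ∀ (i : Fin n) (k : ℤ), (k ≤ d ∨ u ≤ k) →
      ∃ y, f (i, k) = some y ∧ g (i, k) = some y :=
  stmt12_general (lexLe n) hf.1 hf.2.2.1
end
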